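/- Let M = (E, I) be a matroid on a finite set E with rank r(M) and matroid polytope P(M). Let F, F' : 2^E → [0,1] be set functions with |F(S) − F'(S)| ≤ Δ for all S ⊆ E, and let f, f' be their multilinear extensions. Then for every x ∈ [0,1]^E and every y ∈ P(M), |⟨y, ∇f(x) − ∇f'(x)⟩| ≤ 2·Δ·r(M). -/

import Mathlib

open Finset

/-- The multilinear extension of a set function `F : 2^E → ℝ`. -/
noncomputable def multilinearExt {E : Type*} [Fintype E] [DecidableEq E]
    (F : Finset E → ℝ) (x : E → ℝ) : ℝ :=
  ∑ S : Finset E, F S * (∏ e ∈ S, x e) * ∏ e ∈ Sᶜ, (1 - x e)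

/-- The partial derivative `∂f/∂x(e)` of the multilinear extension at `x`. -/
noncomputable def multilinearGrad {E : Type*} [Fintype E] [DecidableEq E]
    (F : Finset E → ℝ) (x : E → ℝ) (e : E) : ℝ :=
  deriv (fun t => multilinearExt F (Function.update x e t)) (x e)

/-! The multilinear extension is affine in each coordinate, so each partial derivative is the
difference of its values at two points of the cube. On the cube it is an average of the values of
the set function, with weights `(∏ e ∈ S, x e) * ∏ e ∈ Sᶜ, (1 - x e)`, so a bound `Δ` on the set
function gives the bound `2 * Δ` on each partial derivative. Since the extension and its gradient
are linear in the set function, this applies to `F - F'`; pairing with `y` costs a factor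
`∑ e, |y e|`, which is at most the rank on the matroid polytope. -/

theorem sum_prod_mul_prod_compl_one_sub {ι R : Type*} [Fintype ι] [DecidableEq ι] [CommRing R]
    (x : ι → R) : ∑ S : Finset ι, (∏ i ∈ S, x i) * ∏ i ∈ Sᶜ, (1 - x i) = 1 := by
  simp [← Fintype.prod_add]

section MultilinearExt

variable {E : Type*} [Fintype E] [DecidableEq E]

theorem multilinearExt_sub (F F' : Finset E → ℝ) (x : E → ℝ) :
    multilinearExt (F - F') x = multilinearExt F x - multilinearExt F' x := by
  simp only [multilinearExt, Pi.sub_apply, sub_mul, sum_sub_distrib]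

theorem abs_multilinearExt_le {F : Finset E → ℝ} {C : ℝ} (hF : ∀ S, |F S| ≤ C)
    {x : E → ℝ} (hx : ∀ e, x e ∈ Set.Icc (0 : ℝ) 1) : |multilinearExt F x| ≤ C := by
  have weight_nonneg (S : Finset E) : 0 ≤ (∏ e ∈ S, x e) * ∏ e ∈ Sᶜ, (1 - x e) :=
    mul_nonneg (prod_nonneg fun e _ => (hx e).1)
      (prod_nonneg fun e _ => sub_nonneg.2 (hx e).2)
  calc |multilinearExt F x|
      ≤ ∑ S : Finset E, |F S * (∏ e ∈ S, x e) * ∏ e ∈ Sᶜ, (1 - x e)| :=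
        abs_sum_le_sum_abs _ _
    _ = ∑ S : Finset E, |F S| * ((∏ e ∈ S, x e) * ∏ e ∈ Sᶜ, (1 - x e)) :=
        sum_congr rfl fun S _ => by rw [mul_assoc, abs_mul, abs_of_nonneg (weight_nonneg S)]
    _ ≤ ∑ S : Finset E, C * ((∏ e ∈ S, x e) * ∏ e ∈ Sᶜ, (1 - x e)) :=
        sum_le_sum fun S _ => mul_le_mul_of_nonneg_right (hF S) (weight_nonneg S)
    _ = C := by rw [← mul_sum, sum_prod_mul_prod_compl_one_sub, mul_one]

theorem multilinearExt_update (F : Finset E → ℝ) (x : E → ℝ) (e : E) (t : ℝ) :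
    multilinearExt F (Function.update x e t) =
      t * multilinearExt F (Function.update x e 1) +
        (1 - t) * multilinearExt F (Function.update x e 0) := by
  have one_sub_update (u : ℝ) (i : E) :
      1 - Function.update x e u i = Function.update (fun j => 1 - x j) e (1 - u) i :=
    Function.apply_update (fun _ r => 1 - r) x e u i
  simp only [multilinearExt, one_sub_update, mul_sum, ← sum_add_distrib]
  refine sum_congr rfl fun S _ => ?_
  by_cases he : e ∈ S
  · have he' : e ∉ Sᶜ := by simpa using he
    simp only [prod_update_of_mem he, prod_update_of_notMem he']
    ring
  · have he' : e ∈ Sᶜ := by simpa using he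
    simp only [prod_update_of_mem he', prod_update_of_notMem he]
    ring

theorem hasDerivAt_multilinearExt_update (F : Finset E → ℝ) (x : E → ℝ) (e : E) (t : ℝ) :
    HasDerivAt (fun s => multilinearExt F (Function.update x e s))
      (multilinearExt F (Function.update x e 1) - multilinearExt F (Function.update x e 0)) t := by
  rw [funext (multilinearExt_update F x e)]
  exact (((hasDerivAt_id t).mul_const _).add
    (((hasDerivAt_id t).const_sub 1).mul_const _)).congr_deriv (by ring)

theorem multilinearGrad_eq_sub (F : Finset E → ℝ) (x : E → ℝ) (e : E) :
    multilinearGrad F x e =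
      multilinearExt F (Function.update x e 1) - multilinearExt F (Function.update x e 0) :=
  (hasDerivAt_multilinearExt_update F x e (x e)).deriv

theorem multilinearGrad_sub (F F' : Finset E → ℝ) (x : E → ℝ) (e : E) :
    multilinearGrad (F - F') x e = multilinearGrad F x e - multilinearGrad F' x e := by
  simp only [multilinearGrad_eq_sub, multilinearExt_sub]
  ring

theorem abs_multilinearGrad_le {F : Finset E → ℝ} {C : ℝ} (hF : ∀ S, |F S| ≤ C)
    {x : E → ℝ} (hx : ∀ e, x e ∈ Set.Icc (0 : ℝ) 1) (e : E) :
    |multilinearGrad F x e| ≤ 2 * C := by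
  have abs_ext_update_le {u : ℝ} (hu : u ∈ Set.Icc (0 : ℝ) 1) :
      |multilinearExt F (Function.update x e u)| ≤ C :=
    abs_multilinearExt_le hF <|
      (Function.forall_update_iff x fun _ r => r ∈ Set.Icc (0 : ℝ) 1).2 ⟨hu, fun i _ => hx i⟩
  calc |multilinearGrad F x e|
      ≤ |multilinearExt F (Function.update x e 1)| +
          |multilinearExt F (Function.update x e 0)| := by
        rw [multilinearGrad_eq_sub]
        exact abs_sub _ _
    _ ≤ C + C :=
        add_le_add (abs_ext_update_le unitInterval.one_mem)
          (abs_ext_update_le unitInterval.zero_mem)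
    _ = 2 * C := (two_mul C).symm

theorem inner_grad_diff_le_rank_general {F F' : Finset E → ℝ} {Δ : ℝ}
    (hsens : ∀ S, |F S - F' S| ≤ Δ) {x : E → ℝ} (hx : ∀ e, x e ∈ Set.Icc (0 : ℝ) 1) (y : E → ℝ) :
    |∑ e, y e * (multilinearGrad F x e - multilinearGrad F' x e)| ≤ 2 * Δ * ∑ e, |y e| :=
  calc |∑ e, y e * (multilinearGrad F x e - multilinearGrad F' x e)|
      = |∑ e, y e * multilinearGrad (F - F') x e| := by simp only [multilinearGrad_sub]
    _ ≤ ∑ e, |y e * multilinearGrad (F - F') x e| := abs_sum_le_sum_abs _ _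
    _ ≤ ∑ e, 2 * Δ * |y e| := sum_le_sum fun e _ => by
        rw [abs_mul, mul_comm]
        exact mul_le_mul_of_nonneg_right (abs_multilinearGrad_le hsens hx e) (abs_nonneg _)
    _ = 2 * Δ * ∑ e, |y e| := (mul_sum ..).symm

end MultilinearExt

/-- Let `M = (E, Indep)` be a matroid with rank function `rk` and matroid polytope
`P(M) = {y ≥ 0 : ∑_{e ∈ S} y(e) ≤ rk(S) for all S}`.  If `F, F' : 2^E → [0,1]` satisfy
`|F(S) − F'(S)| ≤ Δ` for all `S`, then for every `x ∈ [0,1]^E` and `y ∈ P(M)`,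
`|⟨y, ∇f(x) − ∇f'(x)⟩| ≤ 2·Δ·r(M)` where `r(M) = rk(E)`. -/
theorem inner_grad_diff_le_rank {E : Type*} [Fintype E] [DecidableEq E]
    (Indep : Finset E → Prop)
    (h_empty : Indep ∅)
    (h_subset : ∀ ⦃A B : Finset E⦄, A ⊆ B → Indep B → Indep A)
    (h_exchange : ∀ ⦃A B : Finset E⦄, Indep A → Indep B → A.card < B.card →
      ∃ e ∈ B \ A, Indep (insert e A))
    (rk : Finset E → ℕ)
    (hrk : ∀ S : Finset E, IsGreatest {n | ∃ A ⊆ S, Indep A ∧ A.card = n} (rk S))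
    (F F' : Finset E → ℝ)
    (hF : ∀ S, F S ∈ Set.Icc (0 : ℝ) 1) (hF' : ∀ S, F' S ∈ Set.Icc (0 : ℝ) 1)
    (Δ : ℝ) (hsens : ∀ S, |F S - F' S| ≤ Δ)
    (x y : E → ℝ) (hx : ∀ e, x e ∈ Set.Icc (0 : ℝ) 1)
    (hy0 : ∀ e, 0 ≤ y e) (hyP : ∀ S : Finset E, ∑ e ∈ S, y e ≤ (rk S : ℝ)) :
    |∑ e, y e * (multilinearGrad F x e - multilinearGrad F' x e)| ≤
      2 * Δ * (rk Finset.univ : ℝ) := by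
  have hΔ : 0 ≤ Δ := (abs_nonneg _).trans (hsens ∅)
  have sum_abs_le : ∑ e, |y e| ≤ rk univ := by simpa only [abs_of_nonneg (hy0 _)] using hyP univ
  exact (inner_grad_diff_le_rank_general hsens hx y).trans (by gcongr)
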